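/- Let $A$ be a bialgebra over a commutative ring $k$, with multiplication $m$, comultiplication $\Delta(a)=a_{(1)}\otimes a_{(2)}$ and counit $\varepsilon$, and let $r:A\times A\to k$ be a $k$-bilinear map satisfying $$r(ab,c)=r(a,c_{(1)})\,r(b,c_{(2)}),\qquad r(a,bc)=r(a_{(1)},c)\,r(a_{(2)},b)\qquad\text{for all } a,b,c\in A.$$ Call a pair $(a,b)$ of elements of $A$ *$r$-commuting* if $r(a_{(1)},b_{(1)})\,a_{(2)}b_{(2)}=r(a_{(2)},b_{(2)})\,b_{(1)}a_{(1)}$ in $A$. Call a $k$-submodule $C\subseteq A$ a *subcoalgebra* if $\Delta(C)$ is contained in the image of $C\otimes C$ in $A\otimes A$. Then: (i) Let $C\subseteq A$ be a subcoalgebra and $a,b\in A$. If $(a,c)$ and $(b,c)$ are $r$-commuting for all $c\in C$, then $(ab,c)$ is $r$-commuting for all $c\in C$. (ii) Let $C\subseteq A$ be a subcoalgebra and $b,c\in A$. If $(a,b)$ and $(a,c)$ are $r$-commuting for all $a\in C$, then $(a,bc)$ is $r$-commuting for all $a\in C$. (iii) Consequently, let $S\subseteq A$ generate $A$ as a $k$-algebra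 and suppose that the $k$-span of $S\cup\{1\}$ is a subcoalgebra. If $(s,t)$ is $r$-commuting for all $s,t\in S\cup\{1\}$, then every pair of elements of $A$ is $r$-commuting. If moreover $r$ has a two-sided convolution inverse $\bar r$ (that is, $r*\bar r=\bar r*r=\varepsilon\otimes\varepsilon$ in $\mathrm{Hom}_k(A\otimes A,k)$), then the following are equivalent: (1) the commutation law $m^{\mathrm{op}}=r*m*\bar r$ holds in $\mathrm{Hom}_k(A\otimes A,A)$, where $m^{\mathrm{op}}(a\otimes b)=ba$; (2) every pair of elements of $A$ is $r$-commuting; (3) $(s,t)$ is $r$-commuting for all $s,t\in S$; (4) $m^{\mathrm{op}}(s\otimes t)=(r*m*\bar r)(s\otimes t)$ for all $s,t\in S$. -/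

import Mathlib

open TensorProduct WithConv

/-- The pair `(a, b)` is `r`-commuting:
`Σ r(a₍₁₎, b₍₁₎)·a₍₂₎b₍₂₎ = Σ r(a₍₂₎, b₍₂₎)·b₍₁₎a₍₁₎`. -/
noncomputable def rComm {k A : Type*} [CommRing k] [Ring A] [Bialgebra k A]
    (r : A →ₗ[k] A →ₗ[k] k) (a b : A) : Prop :=
  (TensorProduct.lid k A)
      ((TensorProduct.map (TensorProduct.lift r) (LinearMap.mul' k A))
        ((TensorProduct.tensorTensorTensorComm k A A A A)
          ((Coalgebra.comul (R := k) a) ⊗ₜ[k] (Coalgebra.comul (R := k) b)))) =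
  (TensorProduct.rid k A)
      ((TensorProduct.map ((LinearMap.mul' k A) ∘ₗ (TensorProduct.comm k A A).toLinearMap)
          (TensorProduct.lift r))
        ((TensorProduct.tensorTensorTensorComm k A A A A)
          ((Coalgebra.comul (R := k) a) ⊗ₜ[k] (Coalgebra.comul (R := k) b))))

/-- A `k`-submodule `C` of a coalgebra `A` is a subcoalgebra if `Δ(C)` lies in the image of
`C ⊗ C` in `A ⊗ A`. -/
def IsSubcoalgebra {k A : Type*} [CommRing k] [AddCommGroup A] [Module k A] [Coalgebra k A]
    (C : Submodule k A) : Prop :=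
  ∀ c ∈ C, Coalgebra.comul (R := k) c ∈
    LinearMap.range (TensorProduct.map C.subtype C.subtype)

/-- A bilinear form `s` on `A`, seen as the linear map `A ⊗ A → A`, `a ⊗ b ↦ s(a, b)·1`, in the
convolution algebra `Hom(A ⊗ A, A)`. -/
noncomputable def formToAlg {k A : Type*} [CommRing k] [Ring A] [Bialgebra k A]
    (s : A →ₗ[k] A →ₗ[k] k) : WithConv (A ⊗[k] A →ₗ[k] A) :=
  toConv (Algebra.linearMap k A ∘ₗ TensorProduct.lift s)

/-- The multiplication `m : a ⊗ b ↦ ab` in the convolution algebra `Hom(A ⊗ A, A)`. -/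
noncomputable def mulMap (k A : Type*) [CommRing k] [Ring A] [Bialgebra k A] :
    WithConv (A ⊗[k] A →ₗ[k] A) :=
  toConv (LinearMap.mul' k A)

/-- The opposite multiplication `m^op : a ⊗ b ↦ ba` in the convolution algebra
`Hom(A ⊗ A, A)`. -/
noncomputable def mulOpMap (k A : Type*) [CommRing k] [Ring A] [Bialgebra k A] :
    WithConv (A ⊗[k] A →ₗ[k] A) :=
  toConv (LinearMap.mul' k A ∘ₗ (TensorProduct.comm k A A).toLinearMap)

/-- `rbar` is a two-sided inverse of `r` in the convolution algebra `Hom(A ⊗ A, k)`, whose unit is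
`ε ⊗ ε`. -/
def IsConvInverse {k A : Type*} [CommRing k] [Ring A] [Bialgebra k A]
    (r rbar : A →ₗ[k] A →ₗ[k] k) : Prop :=
  toConv (TensorProduct.lift r) * toConv (TensorProduct.lift rbar) = 1 ∧
  toConv (TensorProduct.lift rbar) * toConv (TensorProduct.lift r) = 1

open Coalgebra MulOpposite

section Pairing

variable {k B C E : Type*} [CommRing k] [AddCommGroup B] [Module k B] [AddCommGroup C]
  [Module k C] [AddCommGroup E] [Module k E]

/-- For a bilinear pairing `ρ` of `B` and `C`, the tensor `b ⊗ e` acts as `c ↦ ρ(b, c) e`. -/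
noncomputable def pairingMap (ρ : B →ₗ[k] C →ₗ[k] k) : B ⊗[k] E →ₗ[k] C →ₗ[k] E :=
  TensorProduct.lift (LinearMap.smulRightₗ ∘ₗ ρ)

@[simp]
theorem pairingMap_tmul (ρ : B →ₗ[k] C →ₗ[k] k) (b : B) (e : E) (c : C) :
    pairingMap ρ (b ⊗ₜ e) c = ρ b c • e := rfl

end Pairing

section Convolution

variable {k C E : Type*} [CommRing k] [AddCommGroup C] [Module k C] [Coalgebra k C]
  [Ring E] [Algebra k E]

/-- Convolution products agree on a subcoalgebra if their factors do. -/
theorem IsSubcoalgebra.convMul_congr {D : Submodule k C} (hD : IsSubcoalgebra D)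
    {f g f' g' : WithConv (C →ₗ[k] E)} (hf : ∀ c ∈ D, f c = f' c) (hg : ∀ c ∈ D, g c = g' c) :
    ∀ c ∈ D, (f * g) c = (f' * g') c := by
  intro c hc
  obtain ⟨x, hx⟩ := hD c hc
  have hf' : f.ofConv ∘ₗ D.subtype = f'.ofConv ∘ₗ D.subtype := LinearMap.ext fun x ↦ hf x x.2
  have hg' : g.ofConv ∘ₗ D.subtype = g'.ofConv ∘ₗ D.subtype := LinearMap.ext fun x ↦ hg x x.2
  rw [LinearMap.convMul_apply, LinearMap.convMul_apply, ← hx, TensorProduct.map_map,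
    TensorProduct.map_map, hf', hg']

theorem isSubcoalgebra_top : IsSubcoalgebra (⊤ : Submodule k C) := by
  intro c _
  have : Function.Surjective (TensorProduct.map (⊤ : Submodule k C).subtype
      (⊤ : Submodule k C).subtype) :=
    TensorProduct.map_surjective (fun x ↦ ⟨⟨x, trivial⟩, rfl⟩) (fun x ↦ ⟨⟨x, trivial⟩, rfl⟩)
  exact this _

/-- The image of `D ⊗ D` is a subcoalgebra of `C ⊗ C` if `D` is a subcoalgebra of `C`. -/
theorem IsSubcoalgebra.tensor {D : Submodule k C} (hD : IsSubcoalgebra D) :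
    IsSubcoalgebra (LinearMap.range (TensorProduct.map D.subtype D.subtype)) := by
  rintro _ ⟨x, rfl⟩
  induction x with
  | zero => simp
  | add x y hx hy => rw [map_add, map_add]; exact add_mem hx hy
  | tmul x y =>
    obtain ⟨u, hu⟩ := hD x x.2
    obtain ⟨v, hv⟩ := hD y y.2
    rw [TensorProduct.map_tmul, Submodule.subtype_apply, Submodule.subtype_apply,
      TensorProduct.comul_tmul, ← hu, ← hv]
    clear hu hv
    induction u with
    | zero => simp
    | add u u' hu hu' => rw [map_add, add_tmul, map_add]; exact add_mem hu hu'
    | tmul a b =>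
      induction v with
      | zero => simp
      | add v v' hv hv' => rw [map_add, tmul_add, map_add]; exact add_mem hv hv'
      | tmul c d =>
        let p : LinearMap.range (TensorProduct.map D.subtype D.subtype) := ⟨_, a ⊗ₜ c, rfl⟩
        let q : LinearMap.range (TensorProduct.map D.subtype D.subtype) := ⟨_, b ⊗ₜ d, rfl⟩
        exact ⟨p ⊗ₜ q, rfl⟩

theorem pairingMap_mul {B : Type*} [Ring B] [Algebra k B] (ρ : B →ₗ[k] C →ₗ[k] k)
    (hρ : ∀ a b : B, toConv (ρ (a * b)) = toConv (ρ a) * toConv (ρ b)) (x y : B ⊗[k] E) :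
    toConv (pairingMap ρ (x * y)) = toConv (pairingMap ρ x) * toConv (pairingMap ρ y) := by
  induction x with
  | zero => simp
  | add x x' hx hx' => simp only [add_mul, map_add, toConv_add, hx, hx']
  | tmul b e =>
    induction y with
    | zero => simp
    | add y y' hy hy' => simp only [mul_add, map_add, toConv_add, hy, hy']
    | tmul b' e' =>
      ext c
      have h : ρ (b * b') c = (toConv (ρ b) * toConv (ρ b')) c :=
        congrArg (fun f : WithConv (C →ₗ[k] k) ↦ f c) (hρ b b')
      rw [(ℛ k c).convMul_apply] at h ⊢
      simp [h, Finset.sum_smul, smul_smul, mul_comm]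

end Convolution

section Bialgebra

variable {k A : Type*} [CommRing k] [Ring A] [Bialgebra k A]

theorem rComm_iff_sum (r : A →ₗ[k] A →ₗ[k] k) {a b : A} {ι κ : Type*}
    (x : Coalgebra.Repr k a ι) (y : Coalgebra.Repr k b κ) :
    rComm r a b ↔
      ∑ j ∈ y.index, ∑ i ∈ x.index, r (x.left i) (y.left j) • (x.right i * y.right j) =
      ∑ j ∈ y.index, ∑ i ∈ x.index, r (x.right i) (y.right j) • (y.left j * x.left i) := by
  rw [rComm, ← x.eq, ← y.eq]
  simp [sum_tmul, tmul_sum]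

theorem rComm_iff_convMul (r : A →ₗ[k] A →ₗ[k] k) (a c : A) :
    rComm r a c ↔
      (toConv (pairingMap r (comul (R := k) a)) * toConv LinearMap.id :
        WithConv (A →ₗ[k] A)) c =
      (toConv LinearMap.id * toConv (pairingMap r (TensorProduct.comm k A A
        (comul (R := k) a))) : WithConv (A →ₗ[k] A)) c := by
  rw [rComm_iff_sum r (ℛ k a) (ℛ k c), (ℛ k c).convMul_apply, (ℛ k c).convMul_apply]
  conv_rhs => rw [← (ℛ k a).eq]
  simp [Finset.sum_mul, Finset.mul_sum]

theorem rComm_iff_convMul_op (r : A →ₗ[k] A →ₗ[k] k) (a b : A) :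
    rComm r a b ↔
      (toConv (pairingMap (r.flip ∘ₗ (opLinearEquiv k).symm.toLinearMap)
        (comul (R := k) (op b))) * toConv (opLinearEquiv k).toLinearMap :
          WithConv (A →ₗ[k] Aᵐᵒᵖ)) a =
      (toConv (opLinearEquiv k).toLinearMap *
        toConv (pairingMap (r.flip ∘ₗ (opLinearEquiv k).symm.toLinearMap)
          (TensorProduct.comm k Aᵐᵒᵖ Aᵐᵒᵖ (comul (R := k) (op b)))) :
          WithConv (A →ₗ[k] Aᵐᵒᵖ)) a := by
  rw [rComm_iff_sum r (ℛ k a) (ℛ k b), (ℛ k a).convMul_apply, (ℛ k a).convMul_apply,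
    Finset.sum_comm, Finset.sum_comm (s := (ℛ k b).index), MulOpposite.comul_def]
  conv_rhs => simp only [LinearMap.comp_apply, LinearEquiv.coe_coe, coe_opLinearEquiv_symm,
    unop_op]; rw [← (ℛ k b).eq]
  rw [← op_injective.eq_iff]
  simp [Finset.sum_mul, Finset.mul_sum]

theorem comm_mul (B : Type*) [Ring B] [Algebra k B] (x y : B ⊗[k] B) :
    TensorProduct.comm k B B (x * y) = TensorProduct.comm k B B x * TensorProduct.comm k B B y :=
  map_mul (Algebra.TensorProduct.comm k B B) x y

theorem comul_op_mul (a b : A) :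
    comul (R := k) (op a * op b) = comul (R := k) (op a) * comul (R := k) (op b) := by
  simp only [MulOpposite.comul_def, ← op_mul, LinearMap.comp_apply, LinearEquiv.coe_coe,
    coe_opLinearEquiv_symm, unop_op, Bialgebra.comul_mul]
  generalize comul (R := k) a = x
  generalize comul (R := k) b = y
  induction x with
  | zero => simp
  | add x x' hx hx' => simp only [mul_add, add_mul, map_add, hx, hx']
  | tmul a a' =>
    induction y with
    | zero => simp
    | add y y' hy hy' => simp only [mul_add, add_mul, map_add, hy, hy']
    | tmul b b' => simp

theorem rComm_mul_left (r : A →ₗ[k] A →ₗ[k] k)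
    (hr : ∀ a b : A, toConv (r (a * b)) = toConv (r a) * toConv (r b))
    {C : Submodule k A} (hC : IsSubcoalgebra C) {a b : A}
    (ha : ∀ c ∈ C, rComm r a c) (hb : ∀ c ∈ C, rComm r b c) : ∀ c ∈ C, rComm r (a * b) c := by
  simp only [rComm_iff_convMul] at ha hb ⊢
  simp only [Bialgebra.comul_mul, comm_mul, pairingMap_mul r hr]
  intro c hc
  rw [mul_assoc, hC.convMul_congr (fun _ _ ↦ rfl) hb c hc, ← mul_assoc,
    hC.convMul_congr ha (fun _ _ ↦ rfl) c hc, mul_assoc]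

theorem rComm_mul_right (r : A →ₗ[k] A →ₗ[k] k)
    (hr : ∀ b c : A, toConv (r.flip (b * c)) = toConv (r.flip c) * toConv (r.flip b))
    {C : Submodule k A} (hC : IsSubcoalgebra C) {b c : A}
    (hb : ∀ a ∈ C, rComm r a b) (hc : ∀ a ∈ C, rComm r a c) : ∀ a ∈ C, rComm r a (b * c) := by
  simp only [rComm_iff_convMul_op] at hb hc ⊢
  have hr' : ∀ x y : Aᵐᵒᵖ, toConv ((r.flip ∘ₗ (opLinearEquiv k).symm.toLinearMap) (x * y)) =
      toConv ((r.flip ∘ₗ (opLinearEquiv k).symm.toLinearMap) x) *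
        toConv ((r.flip ∘ₗ (opLinearEquiv k).symm.toLinearMap) y) :=
    fun x y ↦ hr y.unop x.unop
  simp only [op_mul, comul_op_mul, comm_mul, pairingMap_mul _ hr']
  intro a ha
  rw [mul_assoc, hC.convMul_congr (fun _ _ ↦ rfl) hb a ha, ← mul_assoc,
    hC.convMul_congr hc (fun _ _ ↦ rfl) a ha, mul_assoc]

/-- The elements `a` for which `(a, b)` is `r`-commuting. -/
def rCommLeft (r : A →ₗ[k] A →ₗ[k] k) (b : A) : Submodule k A where
  carrier := {a | rComm r a b}
  zero_mem' := by simp [rComm]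
  add_mem' {x y} hx hy := by
    simp only [Set.mem_ofPred_eq, rComm, map_add, add_tmul] at hx hy ⊢
    rw [hx, hy]
  smul_mem' t x hx := by
    simp only [Set.mem_ofPred_eq, rComm, map_smul, ← smul_tmul'] at hx ⊢
    rw [hx]

/-- The elements `b` for which `(a, b)` is `r`-commuting. -/
def rCommRight (r : A →ₗ[k] A →ₗ[k] k) (a : A) : Submodule k A where
  carrier := {b | rComm r a b}
  zero_mem' := by simp [rComm]
  add_mem' {x y} hx hy := by
    simp only [Set.mem_ofPred_eq, rComm, map_add, tmul_add] at hx hy ⊢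
    rw [hx, hy]
  smul_mem' t x hx := by
    simp only [Set.mem_ofPred_eq, rComm, map_smul, tmul_smul] at hx ⊢
    rw [hx]

theorem rComm_of_adjoin_eq_top (r : A →ₗ[k] A →ₗ[k] k)
    (hmul1 : ∀ a b : A, toConv (r (a * b)) = toConv (r a) * toConv (r b))
    (hmul2 : ∀ b c : A, toConv (r.flip (b * c)) = toConv (r.flip c) * toConv (r.flip b))
    {S : Set A} (hS : Algebra.adjoin k S = ⊤)
    (hC : IsSubcoalgebra (Submodule.span k (insert 1 S)))
    (h : ∀ s ∈ insert 1 S, ∀ t ∈ insert 1 S, rComm r s t) (a b : A) : rComm r a b := by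
  have h₁ : ∀ s ∈ insert 1 S, ∀ c ∈ Submodule.span k (insert 1 S), rComm r s c :=
    fun s hs ↦ (Submodule.span_le (p := rCommRight r s)).2 (h s hs)
  have h₂ : ∀ a : A, ∀ c ∈ Submodule.span k (insert 1 S), rComm r a c := by
    intro a
    have ha : a ∈ Algebra.adjoin k S := hS ▸ Algebra.mem_top
    induction ha using Algebra.adjoin_induction with
    | mem x hx => exact h₁ x (Set.mem_insert_of_mem _ hx)
    | algebraMap t =>
      intro c hc
      rw [Algebra.algebraMap_eq_smul_one]
      exact (rCommLeft r c).smul_mem t (h₁ 1 (Set.mem_insert _ _) c hc)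
    | add x y _ _ hx hy => exact fun c hc ↦ (rCommLeft r c).add_mem (hx c hc) (hy c hc)
    | mul x y _ _ hx hy => exact rComm_mul_left r hmul1 hC hx hy
  have hb : b ∈ Algebra.adjoin k S := hS ▸ Algebra.mem_top
  suffices ∀ a ∈ (⊤ : Submodule k A), rComm r a b from this a trivial
  induction hb using Algebra.adjoin_induction with
  | mem x hx => exact fun a _ ↦ h₂ a x (Submodule.subset_span (Set.mem_insert_of_mem _ hx))
  | algebraMap t =>
    intro a _
    rw [Algebra.algebraMap_eq_smul_one]
    exact (rCommRight r a).smul_mem t (h₂ a 1 (Submodule.subset_span (Set.mem_insert _ _)))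
  | add x y _ _ hx hy => exact fun a ha ↦ (rCommRight r a).add_mem (hx a ha) (hy a ha)
  | mul x y _ _ hx hy => exact rComm_mul_right r hmul2 isSubcoalgebra_top hx hy

theorem rComm_iff_formToAlg (r : A →ₗ[k] A →ₗ[k] k) (a b : A) :
    rComm r a b ↔
      (formToAlg r * mulMap k A) (a ⊗ₜ[k] b) = (mulOpMap k A * formToAlg r) (a ⊗ₜ[k] b) := by
  rw [rComm_iff_sum r (ℛ k a) (ℛ k b), LinearMap.convMul_apply, LinearMap.convMul_apply,
    TensorProduct.comul_tmul, ← (ℛ k a).eq, ← (ℛ k b).eq]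
  simp [sum_tmul, tmul_sum, formToAlg, mulMap, mulOpMap, Algebra.smul_def, Algebra.commutes]

theorem formToAlg_mul_eq_one {r s : A →ₗ[k] A →ₗ[k] k}
    (h : toConv (TensorProduct.lift r) * toConv (TensorProduct.lift s) = 1) :
    formToAlg r * formToAlg s = 1 := by
  have := LinearMap.algHom_comp_convMul_distrib (Algebra.ofId k A)
    (toConv (TensorProduct.lift r)) (toConv (TensorProduct.lift s))
  rw [h] at this
  exact (ofConv_injective this).symm

/-- Restriction of the convolution product on `A ⊗ A` to `1 ⊗ A`. -/
theorem convMul_one_tmul {E : Type*} [Ring E] [Algebra k E]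
    (f g : WithConv (A ⊗[k] A →ₗ[k] E)) :
    toConv ((f * g).ofConv ∘ₗ TensorProduct.mk k A A 1) =
      toConv (f.ofConv ∘ₗ TensorProduct.mk k A A 1) *
        toConv (g.ofConv ∘ₗ TensorProduct.mk k A A 1) := by
  ext c
  simp only [LinearMap.convMul_apply, LinearMap.comp_apply, TensorProduct.mk_apply,
    TensorProduct.comul_tmul, Bialgebra.comul_one]
  rw [← (ℛ k c).eq]
  simp [tmul_sum, Algebra.TensorProduct.one_def]

/-- Restriction of the convolution product on `A ⊗ A` to `A ⊗ 1`. -/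
theorem convMul_tmul_one {E : Type*} [Ring E] [Algebra k E]
    (f g : WithConv (A ⊗[k] A →ₗ[k] E)) :
    toConv ((f * g).ofConv ∘ₗ (TensorProduct.mk k A A).flip 1) =
      toConv (f.ofConv ∘ₗ (TensorProduct.mk k A A).flip 1) *
        toConv (g.ofConv ∘ₗ (TensorProduct.mk k A A).flip 1) := by
  ext c
  simp only [LinearMap.convMul_apply, LinearMap.comp_apply, TensorProduct.mk_apply,
    LinearMap.flip_apply, TensorProduct.comul_tmul, Bialgebra.comul_one]
  rw [← (ℛ k c).eq]
  simp [sum_tmul, Algebra.TensorProduct.one_def]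

theorem one_comp_one_tmul {E : Type*} [Ring E] [Algebra k E] :
    toConv ((1 : WithConv (A ⊗[k] A →ₗ[k] E)).ofConv ∘ₗ TensorProduct.mk k A A 1) = 1 := by
  ext c
  simp

theorem one_comp_tmul_one {E : Type*} [Ring E] [Algebra k E] :
    toConv ((1 : WithConv (A ⊗[k] A →ₗ[k] E)).ofConv ∘ₗ (TensorProduct.mk k A A).flip 1) = 1 := by
  ext c
  simp

theorem IsConvInverse.apply_one {r rbar : A →ₗ[k] A →ₗ[k] k} (h : IsConvInverse r rbar)
    (hr : toConv (r 1) = toConv (r 1) * toConv (r 1)) :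
    toConv (r 1) = 1 ∧ toConv (rbar 1) = 1 := by
  have h₁ : toConv (r 1) * toConv (rbar 1) = 1 := by
    have := convMul_one_tmul (toConv (TensorProduct.lift r)) (toConv (TensorProduct.lift rbar))
    rw [h.1, one_comp_one_tmul] at this
    exact this.symm
  have h₂ : toConv (r 1) = 1 := by
    calc toConv (r 1) = toConv (r 1) * (toConv (r 1) * toConv (rbar 1)) := by rw [h₁, mul_one]
      _ = 1 := by rw [← mul_assoc, ← hr, h₁]
  exact ⟨h₂, by rwa [h₂, one_mul] at h₁⟩

theorem IsConvInverse.flip_apply_one {r rbar : A →ₗ[k] A →ₗ[k] k} (h : IsConvInverse r rbar)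
    (hr : toConv (r.flip 1) = toConv (r.flip 1) * toConv (r.flip 1)) :
    toConv (r.flip 1) = 1 ∧ toConv (rbar.flip 1) = 1 := by
  have h₁ : toConv (r.flip 1) * toConv (rbar.flip 1) = 1 := by
    have := convMul_tmul_one (toConv (TensorProduct.lift r)) (toConv (TensorProduct.lift rbar))
    rw [h.1, one_comp_tmul_one] at this
    exact this.symm
  have h₂ : toConv (r.flip 1) = 1 := by
    calc toConv (r.flip 1) = toConv (r.flip 1) * (toConv (r.flip 1) * toConv (rbar.flip 1)) := by
          rw [h₁, mul_one]
      _ = 1 := by rw [← mul_assoc, ← hr, h₁]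
  exact ⟨h₂, by rwa [h₂, one_mul] at h₁⟩

theorem formToAlg_one_tmul {s : A →ₗ[k] A →ₗ[k] k} (hs : toConv (s 1) = 1) :
    toConv ((formToAlg s).ofConv ∘ₗ TensorProduct.mk k A A 1) = 1 :=
  congrArg (fun f : WithConv (A →ₗ[k] k) ↦ toConv (Algebra.linearMap k A ∘ₗ f.ofConv)) hs

theorem formToAlg_tmul_one {s : A →ₗ[k] A →ₗ[k] k} (hs : toConv (s.flip 1) = 1) :
    toConv ((formToAlg s).ofConv ∘ₗ (TensorProduct.mk k A A).flip 1) = 1 :=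
  congrArg (fun f : WithConv (A →ₗ[k] k) ↦ toConv (Algebra.linearMap k A ∘ₗ f.ofConv)) hs

/-- Conjugating the multiplication by forms that are normalized in the first argument does not
change it on `1 ⊗ A`. -/
theorem conj_mulMap_one_tmul {r s : A →ₗ[k] A →ₗ[k] k} (hr : toConv (r 1) = 1)
    (hs : toConv (s 1) = 1) (c : A) :
    (formToAlg r * mulMap k A * formToAlg s) (1 ⊗ₜ[k] c) = c := by
  have h := convMul_one_tmul (formToAlg r * mulMap k A) (formToAlg s)
  rw [convMul_one_tmul (formToAlg r) (mulMap k A), formToAlg_one_tmul hr,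
    formToAlg_one_tmul hs, one_mul, mul_one] at h
  exact (congrArg (fun f : WithConv (A →ₗ[k] A) ↦ f c) h).trans (one_mul c)

/-- Conjugating the multiplication by forms that are normalized in the second argument does not
change it on `A ⊗ 1`. -/
theorem conj_mulMap_tmul_one {r s : A →ₗ[k] A →ₗ[k] k} (hr : toConv (r.flip 1) = 1)
    (hs : toConv (s.flip 1) = 1) (c : A) :
    (formToAlg r * mulMap k A * formToAlg s) (c ⊗ₜ[k] 1) = c := by
  have h := convMul_tmul_one (formToAlg r * mulMap k A) (formToAlg s)
  rw [convMul_tmul_one (formToAlg r) (mulMap k A), formToAlg_tmul_one hr,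
    formToAlg_tmul_one hs, one_mul, mul_one] at h
  exact (congrArg (fun f : WithConv (A →ₗ[k] A) ↦ f c) h).trans (mul_one c)

/-- Linear maps on `A ⊗ A` that agree on `s ⊗ t` for `s, t ∈ T` agree on the image of
`span T ⊗ span T`. -/
theorem eq_on_range_map_span {T : Set A} {f g : A ⊗[k] A →ₗ[k] A}
    (h : ∀ s ∈ T, ∀ t ∈ T, f (s ⊗ₜ t) = g (s ⊗ₜ t)) :
    ∀ x ∈ LinearMap.range
      (TensorProduct.map (Submodule.span k T).subtype (Submodule.span k T).subtype),
      f x = g x := by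
  have h₁ : ∀ s ∈ T, ∀ y ∈ Submodule.span k T, f (s ⊗ₜ y) = g (s ⊗ₜ y) := fun s hs ↦
    (Submodule.span_le (p := LinearMap.eqLocus (f ∘ₗ TensorProduct.mk k A A s)
      (g ∘ₗ TensorProduct.mk k A A s))).2 (h s hs)
  have h₂ : ∀ y ∈ Submodule.span k T, ∀ x ∈ Submodule.span k T, f (x ⊗ₜ y) = g (x ⊗ₜ y) :=
    fun y hy ↦ (Submodule.span_le (p := LinearMap.eqLocus
      (f ∘ₗ (TensorProduct.mk k A A).flip y) (g ∘ₗ (TensorProduct.mk k A A).flip y))).2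
      fun s hs ↦ h₁ s hs y hy
  rintro _ ⟨x, rfl⟩
  induction x with
  | zero => simp
  | add x y hx hy => rw [map_add, map_add, map_add, hx, hy]
  | tmul x y => exact h₂ y y.2 x x.2

theorem rComm_one_left {r : A →ₗ[k] A →ₗ[k] k} (hr : toConv (r 1) = 1) (c : A) :
    rComm r 1 c := by
  have h : toConv (pairingMap r (1 ⊗ₜ 1)) = (1 : WithConv (A →ₗ[k] A)) := by
    ext c
    have := congrArg (fun f : WithConv (A →ₗ[k] k) ↦ f c) hr
    simp_all [Algebra.algebraMap_eq_smul_one]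
  rw [rComm_iff_convMul, Bialgebra.comul_one, Algebra.TensorProduct.one_def,
    TensorProduct.comm_tmul, h, one_mul, mul_one]

theorem rComm_one_right {r : A →ₗ[k] A →ₗ[k] k} (hr : toConv (r.flip 1) = 1) (a : A) :
    rComm r a 1 := by
  have h : toConv (pairingMap (r.flip ∘ₗ (opLinearEquiv k).symm.toLinearMap) (1 ⊗ₜ 1)) =
      (1 : WithConv (A →ₗ[k] Aᵐᵒᵖ)) := by
    ext c
    have := congrArg (fun f : WithConv (A →ₗ[k] k) ↦ f c) hr
    simp_all [Algebra.algebraMap_eq_smul_one]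
  have h1 : comul (R := k) (op (1 : A)) = 1 ⊗ₜ 1 := by
    simp [MulOpposite.comul_def, Algebra.TensorProduct.one_def]
  rw [rComm_iff_convMul_op, h1, TensorProduct.comm_tmul, h, one_mul, mul_one]

theorem mulOpMap_eq_conj_iff {r rbar : A →ₗ[k] A →ₗ[k] k} (h : IsConvInverse r rbar) :
    mulOpMap k A = formToAlg r * mulMap k A * formToAlg rbar ↔ ∀ a b : A, rComm r a b := by
  simp only [rComm_iff_formToAlg]
  constructor
  · intro hm a b
    rw [hm, mul_assoc _ (formToAlg rbar), formToAlg_mul_eq_one h.2, mul_one]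
  · intro hm
    have : formToAlg r * mulMap k A = mulOpMap k A * formToAlg r :=
      ofConv_injective (TensorProduct.ext' hm)
    rw [this, mul_assoc, formToAlg_mul_eq_one h.1, mul_one]

/-- If the commutation law holds on a set whose span with `1` is a subcoalgebra, then
the elements of this set are pairwise `r`-commuting. -/
theorem rComm_of_mulOpMap_eq {r rbar : A →ₗ[k] A →ₗ[k] k} (h : IsConvInverse r rbar)
    (hr : toConv (r 1) = toConv (r 1) * toConv (r 1))
    (hr' : toConv (r.flip 1) = toConv (r.flip 1) * toConv (r.flip 1))
    {S : Set A} (hC : IsSubcoalgebra (Submodule.span k (insert 1 S)))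
    (hS : ∀ s ∈ S, ∀ t ∈ S, mulOpMap k A (s ⊗ₜ[k] t) =
      (formToAlg r * mulMap k A * formToAlg rbar) (s ⊗ₜ[k] t)) :
    ∀ s ∈ S, ∀ t ∈ S, rComm r s t := by
  obtain ⟨h₁, h₂⟩ := h.apply_one hr
  obtain ⟨h₃, h₄⟩ := h.flip_apply_one hr'
  have hT : ∀ s ∈ insert 1 S, ∀ t ∈ insert 1 S, mulOpMap k A (s ⊗ₜ[k] t) =
      (formToAlg r * mulMap k A * formToAlg rbar) (s ⊗ₜ[k] t) := by
    rintro s (rfl | hs) t (rfl | ht)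
    · exact (mul_one _).trans (conj_mulMap_one_tmul h₁ h₂ 1).symm
    · exact (mul_one _).trans (conj_mulMap_one_tmul h₁ h₂ t).symm
    · exact (one_mul _).trans (conj_mulMap_tmul_one h₃ h₄ s).symm
    · exact hS s hs t ht
  intro s hs t ht
  have key := hC.tensor.convMul_congr (g := formToAlg r) (eq_on_range_map_span hT)
    (fun _ _ ↦ rfl) (s ⊗ₜ t)
    ⟨⟨s, Submodule.subset_span (Set.mem_insert_of_mem _ hs)⟩ ⊗ₜ
      ⟨t, Submodule.subset_span (Set.mem_insert_of_mem _ ht)⟩, rfl⟩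
  rw [rComm_iff_formToAlg, key, mul_assoc _ (formToAlg rbar), formToAlg_mul_eq_one h.2, mul_one]

end Bialgebra

/-- The two multiplicativity hypotheses say `r(ab, c) = r(a, c₍₁₎)r(b, c₍₂₎)` and
`r(a, bc) = r(a₍₁₎, c)r(a₍₂₎, b)`; products of `toConv` terms are convolution products. -/
theorem stmt12 {k A : Type*} [CommRing k] [Ring A] [Bialgebra k A]
    (r : A →ₗ[k] A →ₗ[k] k)
    (hmul1 : ∀ a b : A, toConv (r (a * b)) = toConv (r a) * toConv (r b))
    (hmul2 : ∀ b c : A, toConv (r.flip (b * c)) = toConv (r.flip c) * toConv (r.flip b)) :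
    (∀ C : Submodule k A, IsSubcoalgebra C → ∀ a b : A,
      (∀ c ∈ C, rComm r a c) → (∀ c ∈ C, rComm r b c) → ∀ c ∈ C, rComm r (a * b) c) ∧
    (∀ C : Submodule k A, IsSubcoalgebra C → ∀ b c : A,
      (∀ a ∈ C, rComm r a b) → (∀ a ∈ C, rComm r a c) → ∀ a ∈ C, rComm r a (b * c)) ∧
    (∀ S : Set A, Algebra.adjoin k S = ⊤ →
      IsSubcoalgebra (Submodule.span k (insert 1 S)) →
      ((∀ s ∈ insert 1 S, ∀ t ∈ insert 1 S, rComm r s t) → ∀ a b : A, rComm r a b) ∧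
      (∀ rbar : A →ₗ[k] A →ₗ[k] k, IsConvInverse r rbar →
        (mulOpMap k A = formToAlg r * mulMap k A * formToAlg rbar ↔
          ∀ a b : A, rComm r a b) ∧
        (mulOpMap k A = formToAlg r * mulMap k A * formToAlg rbar ↔
          ∀ s ∈ S, ∀ t ∈ S, rComm r s t) ∧
        (mulOpMap k A = formToAlg r * mulMap k A * formToAlg rbar ↔
          ∀ s ∈ S, ∀ t ∈ S, mulOpMap k A (s ⊗ₜ[k] t) =
            (formToAlg r * mulMap k A * formToAlg rbar) (s ⊗ₜ[k] t)))) := by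
  refine ⟨fun C hC a b ↦ rComm_mul_left r hmul1 hC, fun C hC b c ↦ rComm_mul_right r hmul2 hC,
    fun S hS hC ↦ ⟨rComm_of_adjoin_eq_top r hmul1 hmul2 hS hC, fun rbar h ↦ ?_⟩⟩
  have hr : toConv (r 1) = toConv (r 1) * toConv (r 1) := by simpa using hmul1 1 1
  have hr' : toConv (r.flip 1) = toConv (r.flip 1) * toConv (r.flip 1) := by
    simpa using hmul2 1 1
  have hiff : mulOpMap k A = formToAlg r * mulMap k A * formToAlg rbar ↔
      ∀ s ∈ S, ∀ t ∈ S, rComm r s t := by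
    refine (mulOpMap_eq_conj_iff h).trans ⟨fun H s _ t _ ↦ H s t, fun H ↦ ?_⟩
    refine rComm_of_adjoin_eq_top r hmul1 hmul2 hS hC ?_
    rintro s (rfl | hs) t (rfl | ht)
    · exact rComm_one_left (h.apply_one hr).1 _
    · exact rComm_one_left (h.apply_one hr).1 _
    · exact rComm_one_right (h.flip_apply_one hr').1 _
    · exact H s hs t ht
  exact ⟨mulOpMap_eq_conj_iff h, hiff, fun H s _ t _ ↦ by rw [H],
    fun H ↦ hiff.2 (rComm_of_mulOpMap_eq h hr hr' hC H)⟩
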